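/- arXiv:2412.09672 — 3 statements merged into one kernel-verified Lean document; each statement's English description precedes it below -/
import Mathlib

section
/- (Welch bound.) Let d ≥ 1, t ≥ 1, and let ψ_1, …, ψ_M ∈ ℂ^d (M ≥ 1) be unit vectors. Then Σ_{i=1}^{M} Σ_{j=1}^{M} |⟨ψ_i, ψ_j⟩|^{2t} ≥ M² / C(d+t−1, t), where C(d+t−1, t) is the binomial coefficient (the dimension of the t-fold symmetric subspace of (ℂ^d)^{⊗t}). -/
open MeasureTheory

lemma welch_swap {M : ℕ} {K : Type*} [Fintype K] (Φ : Fin M → K → ℂ) :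
    ∑ i, ∑ j, ‖∑ k, (starRingEnd ℂ) (Φ i k) * Φ j k‖ ^ 2 =
      ∑ k, ∑ l, ‖∑ i, (starRingEnd ℂ) (Φ i k) * Φ i l‖ ^ 2 := by
  have h : ∀ z : ℂ, ((‖z‖ ^ 2 : ℝ) : ℂ) = z * (starRingEnd ℂ) z := by
    intro z
    rw [Complex.mul_conj, Complex.normSq_eq_norm_sq]
  apply Complex.ofReal_injective
  simp only [Complex.ofReal_sum, h, map_sum, map_mul, Complex.conj_conj,
    Finset.sum_mul_sum]
  have e1 : ∀ i : Fin M, (∑ j, ∑ k, ∑ l, (starRingEnd ℂ) (Φ i k) * Φ j k *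
      (Φ i l * (starRingEnd ℂ) (Φ j l))) = ∑ k, ∑ l, ∑ j, (starRingEnd ℂ) (Φ i k) * Φ j k *
      (Φ i l * (starRingEnd ℂ) (Φ j l)) := by
    intro i
    rw [Finset.sum_comm]
    refine Finset.sum_congr rfl fun k _ => ?_
    rw [Finset.sum_comm]
  simp only [e1]
  rw [Finset.sum_comm]
  refine Finset.sum_congr rfl fun k _ => ?_
  rw [Finset.sum_comm]
  refine Finset.sum_congr rfl fun l _ => ?_
  refine Finset.sum_congr rfl fun i _ => ?_
  refine Finset.sum_congr rfl fun j _ => ?_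
  ring

lemma welch_one {M : ℕ} {K : Type*} [Fintype K] (Φ : Fin M → K → ℂ)
    (h : ∀ m, ∑ k, ‖Φ m k‖ ^ 2 = 1) :
    (M : ℝ) ^ 2 ≤ (Fintype.card K : ℝ) *
      ∑ i, ∑ j, ‖∑ k, (starRingEnd ℂ) (Φ i k) * Φ j k‖ ^ 2 := by
  rw [welch_swap]
  have h1 : (M : ℝ) = ∑ k, ∑ m, ‖Φ m k‖ ^ 2 := by
    rw [Finset.sum_comm]; simp [h]
  rw [h1]
  refine (sq_sum_le_card_mul_sum_sq).trans ?_
  rw [Finset.card_univ]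
  gcongr with k
  have h2 : (∑ m, ‖Φ m k‖ ^ 2) ^ 2 = ‖∑ i, (starRingEnd ℂ) (Φ i k) * Φ i k‖ ^ 2 := by
    simp only [Complex.conj_mul']
    norm_cast
    rw [Real.norm_eq_abs, sq_abs]
  rw [h2]
  exact Finset.single_le_sum (f := fun l => ‖∑ i, (starRingEnd ℂ) (Φ i k) * Φ i l‖ ^ 2)
    (fun _ _ => by positivity) (Finset.mem_univ k)

/-- **Welch bound.** For any family of `M` unit vectors in `ℂ^d`,
`Σ_{i,j} |⟨ψ_i, ψ_j⟩|^{2t} ≥ M² / C(d+t−1, t)`. -/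
theorem welch_bound (d t M : ℕ) (hd : 1 ≤ d) (ht : 1 ≤ t) (hM : 1 ≤ M)
    (ψ : Fin M → (Fin d → ℂ)) (hψ : ∀ m, ∑ i, ‖ψ m i‖ ^ 2 = 1) :
    (M : ℝ) ^ 2 / (Nat.choose (d + t - 1) t) ≤
      ∑ i, ∑ j, ‖∑ a, (starRingEnd ℂ) (ψ i a) * ψ j a‖ ^ (2 * t) := by
  classical
  let Φ : Fin M → Sym (Fin d) t → ℂ := fun m k =>
    (Real.sqrt (k : Multiset (Fin d)).countPerms : ℂ) * ((k : Multiset (Fin d)).map (ψ m)).prod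
  have key : ∀ i j, ∑ k, (starRingEnd ℂ) (Φ i k) * Φ j k =
      (∑ a, (starRingEnd ℂ) (ψ i a) * ψ j a) ^ t := by
    intro i j
    rw [Finset.sum_pow, Finset.sym_univ]
    refine Finset.sum_congr rfl fun k _ => ?_
    have hs : ((Real.sqrt (k : Multiset (Fin d)).countPerms : ℝ) : ℂ) *
        (Real.sqrt (k : Multiset (Fin d)).countPerms : ℝ) =
        ((k : Multiset (Fin d)).countPerms : ℂ) := by
      rw [← Complex.ofReal_mul, Real.mul_self_sqrt (Nat.cast_nonneg _)]; simp
    simp only [Φ, map_mul, Complex.conj_ofReal, Multiset.prod_map_mul, map_multiset_prod,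
      Multiset.map_map, Function.comp_def]
    have hg : ∀ s c x y : ℂ, s * s = c → s * x * (s * y) = c * (x * y) := by
      intro s c x y h
      rw [← h]; ring
    exact hg _ _ _ _ hs
  have hn : ∀ m, ∑ k, ‖Φ m k‖ ^ 2 = 1 := by
    intro m
    have := key m m
    simp only [Complex.conj_mul'] at this
    have h2 := hψ m
    norm_cast at this
    rw [this, h2, one_pow]
  have := welch_one Φ hn
  simp only [key, Sym.card_sym_eq_choose, Fintype.card_fin, norm_pow, ← pow_mul] at this
  have hpos : 0 < (Nat.choose (d + t - 1) t : ℝ) := by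
    exact_mod_cast Nat.choose_pos (by omega)
  rw [div_le_iff₀ hpos]
  simp only [mul_comm t 2] at this
  linarith
end

section
/- Let d ≥ 1, t ≥ 1, and let (ψ_m)_{m<M} (M ≥ 1) be a complex projective t-design of unit vectors in ℂ^d. Then the Welch bound is saturated: Σ_{i<M} Σ_{j<M} |⟨ψ_i, ψ_j⟩|^{2t} = M² / C(d+t−1, t). -/
open MeasureTheory Matrix

noncomputable instance Matrix.measurableSpace {m n R : Type*} [MeasurableSpace R] :
    MeasurableSpace (Matrix m n R) := inferInstanceAs (MeasurableSpace (m → n → R))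

instance Matrix.borelSpace {m n R : Type*} [Countable m] [Countable n]
    [TopologicalSpace R] [MeasurableSpace R] [BorelSpace R] [SecondCountableTopology R] :
    BorelSpace (Matrix m n R) := inferInstanceAs (BorelSpace (m → n → R))

instance {ι : Type*} [Fintype ι] [DecidableEq ι] :
    BorelSpace (Matrix.unitaryGroup ι ℂ) := Subtype.borelSpace _

namespace WelchAux

instance compactU (d : ℕ) : CompactSpace (Matrix.unitaryGroup (Fin d) ℂ) := by
  refine (isCompact_iff_compactSpace (s := (Matrix.unitaryGroup (Fin d) ℂ : Set (Matrix (Fin d) (Fin d) ℂ)))).1 ?_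
  have hK : IsCompact (Set.pi Set.univ (fun _ : Fin d => Set.pi Set.univ
      (fun _ : Fin d => Metric.closedBall (0 : ℂ) 1)) : Set (Fin d → Fin d → ℂ)) :=
    isCompact_univ_pi fun _ => isCompact_univ_pi fun _ => isCompact_closedBall _ _
  have hcl : IsClosed {A : Matrix (Fin d) (Fin d) ℂ | star A * A = 1} :=
    isClosed_eq (by fun_prop) continuous_const
  have hS : ((Matrix.unitaryGroup (Fin d) ℂ : Set (Matrix (Fin d) (Fin d) ℂ))) =
      {A : Matrix (Fin d) (Fin d) ℂ | star A * A = 1} := by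
    ext A
    simp [Matrix.mem_unitaryGroup_iff']
  have hcl' : IsClosed ((Matrix.unitaryGroup (Fin d) ℂ : Set (Matrix (Fin d) (Fin d) ℂ))) := by
    rw [hS]; exact hcl
  refine IsCompact.of_isClosed_subset (hK : IsCompact (X := Matrix (Fin d) (Fin d) ℂ) _) hcl' ?_
  intro A hA
  refine Set.mem_univ_pi.2 fun i => Set.mem_univ_pi.2 fun j => ?_
  rw [mem_closedBall_zero_iff]
  exact entry_norm_bound_of_unitary hA i j

theorem integrable_of_cont {d : ℕ} (μ : Measure (Matrix.unitaryGroup (Fin d) ℂ))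
    [IsProbabilityMeasure μ] {f : Matrix.unitaryGroup (Fin d) ℂ → ℂ} (hf : Continuous f) :
    Integrable f μ :=
  hf.integrable_of_hasCompactSupport (HasCompactSupport.of_compactSpace f)

/-- the rotated vector -/
def vv {d : ℕ} (ψ₀ : Fin d → ℂ) (V : Matrix.unitaryGroup (Fin d) ℂ) : Fin d → ℂ :=
  (V : Matrix (Fin d) (Fin d) ℂ).mulVec ψ₀

theorem vv_cont {d : ℕ} (ψ₀ : Fin d → ℂ) (a : Fin d) : Continuous fun V => vv ψ₀ V a := by
  unfold vv
  have : Continuous fun V : Matrix.unitaryGroup (Fin d) ℂ =>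
    (V : Matrix (Fin d) (Fin d) ℂ).mulVec ψ₀ := by fun_prop
  exact (continuous_apply a).comp this

theorem vv_mul {d : ℕ} (ψ₀ : Fin d → ℂ) (U V : Matrix.unitaryGroup (Fin d) ℂ) :
    vv ψ₀ (U * V) = (U : Matrix (Fin d) (Fin d) ℂ).mulVec (vv ψ₀ V) := by
  simp [vv, Matrix.mulVec_mulVec]

theorem vv_norm {d : ℕ} (ψ₀ : Fin d → ℂ) (hψ₀ : ∑ i, ‖ψ₀ i‖ ^ 2 = 1)
    (V : Matrix.unitaryGroup (Fin d) ℂ) :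
    ∑ i, vv ψ₀ V i * (starRingEnd ℂ) (vv ψ₀ V i) = 1 := by
  have h1 : ∑ i, vv ψ₀ V i * (starRingEnd ℂ) (vv ψ₀ V i) = vv ψ₀ V ⬝ᵥ star (vv ψ₀ V) := rfl
  have h2 : vv ψ₀ V ⬝ᵥ star (vv ψ₀ V) = ψ₀ ⬝ᵥ star ψ₀ := by
    rw [dotProduct_comm]
    unfold vv
    rw [Matrix.star_mulVec, ← Matrix.dotProduct_mulVec, Matrix.mulVec_mulVec,
      ← Matrix.star_eq_conjTranspose, Matrix.mem_unitaryGroup_iff'.1 V.2, Matrix.one_mulVec,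
      dotProduct_comm]
  rw [h1, h2]
  simp only [dotProduct, Pi.star_apply, RCLike.star_def, Complex.mul_conj, Complex.normSq_eq_norm_sq]
  exact_mod_cast hψ₀

theorem expand_pow {d t : ℕ} (x w : Fin d → ℂ) :
    ((‖∑ a, (starRingEnd ℂ) (x a) * w a‖ ^ (2 * t) : ℝ) : ℂ) =
      ∑ p : Fin t → Fin d, ∑ q : Fin t → Fin d,
        (∏ n, (starRingEnd ℂ) (x (p n)) * x (q n)) *
          ∏ n, w (p n) * (starRingEnd ℂ) (w (q n)) := by
  rw [pow_mul, ← Complex.normSq_eq_norm_sq, Complex.ofReal_pow, ← Complex.mul_conj, mul_pow,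
    map_sum, Fintype.sum_pow, Fintype.sum_pow, Finset.sum_mul_sum]
  refine Finset.sum_congr rfl fun p _ => Finset.sum_congr rfl fun q _ => ?_
  simp only [← Finset.prod_mul_distrib]
  refine Finset.prod_congr rfl fun n _ => ?_
  simp
  ring

/-- the frame integral -/
noncomputable def FF {d : ℕ} (μ : Measure (Matrix.unitaryGroup (Fin d) ℂ)) (ψ₀ : Fin d → ℂ) (t : ℕ)
    (x : Fin d → ℂ) : ℂ :=
  ∫ V, ((‖∑ a, (starRingEnd ℂ) (x a) * vv ψ₀ V a‖ ^ (2 * t) : ℝ) : ℂ) ∂μ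

theorem design_sum {d t M : ℕ} (hM : 1 ≤ M)
    (μ : Measure (Matrix.unitaryGroup (Fin d) ℂ)) [IsProbabilityMeasure μ]
    (ψ₀ : Fin d → ℂ) (ψ : Fin M → (Fin d → ℂ))
    (hdesign : ∀ p q : Fin t → Fin d,
      (1 / M : ℂ) * ∑ m, ∏ n, ψ m (p n) * (starRingEnd ℂ) (ψ m (q n)) =
        ∫ V, ∏ n, vv ψ₀ V (p n) * (starRingEnd ℂ) (vv ψ₀ V (q n)) ∂μ) (x : Fin d → ℂ) :
    ∑ j, ((‖∑ a, (starRingEnd ℂ) (x a) * ψ j a‖ ^ (2 * t) : ℝ) : ℂ) = M * FF μ ψ₀ t x := by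
  have hc := vv_cont ψ₀
  have hM0 : (M : ℂ) ≠ 0 := by exact_mod_cast (by omega : M ≠ 0)
  unfold FF
  simp only [expand_pow]
  rw [integral_finsetSum _ fun p _ => integrable_of_cont μ (by fun_prop)]
  rw [Finset.mul_sum, Finset.sum_comm]
  refine Finset.sum_congr rfl fun p _ => ?_
  rw [integral_finsetSum _ fun p _ => integrable_of_cont μ (by fun_prop)]
  rw [Finset.mul_sum, Finset.sum_comm]
  refine Finset.sum_congr rfl fun q _ => ?_
  rw [integral_const_mul, ← hdesign, ← Finset.mul_sum]
  field_simp

theorem FF_unitary {d : ℕ} (μ : Measure (Matrix.unitaryGroup (Fin d) ℂ)) [μ.IsHaarMeasure]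
    (ψ₀ : Fin d → ℂ) (t : ℕ) (x : Fin d → ℂ) (U : Matrix.unitaryGroup (Fin d) ℂ) :
    FF μ ψ₀ t ((U : Matrix (Fin d) (Fin d) ℂ).mulVec x) = FF μ ψ₀ t x := by
  unfold FF
  rw [← integral_mul_left_eq_self _ U]
  congr 1
  ext V
  congr 3
  rw [vv_mul]
  change star ((U : Matrix (Fin d) (Fin d) ℂ).mulVec x) ⬝ᵥ
    (U : Matrix (Fin d) (Fin d) ℂ).mulVec (vv ψ₀ V) = star x ⬝ᵥ vv ψ₀ V
  rw [Matrix.star_mulVec, ← Matrix.dotProduct_mulVec, Matrix.mulVec_mulVec,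
      ← Matrix.star_eq_conjTranspose, Matrix.mem_unitaryGroup_iff'.1 U.2, Matrix.one_mulVec]

theorem FF_smul {d : ℕ} (μ : Measure (Matrix.unitaryGroup (Fin d) ℂ))
    (ψ₀ : Fin d → ℂ) (t : ℕ) (x : Fin d → ℂ) (r : ℝ) :
    FF μ ψ₀ t (fun a => r * x a) = ((r ^ 2) ^ t : ℝ) * FF μ ψ₀ t x := by
  unfold FF
  rw [← integral_const_mul]
  congr 1
  ext V
  rw [← Complex.ofReal_mul]
  congr 1
  simp only [map_mul, Complex.conj_ofReal, mul_assoc]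
  rw [← Finset.mul_sum, norm_mul, mul_pow, pow_mul, Complex.norm_real, Real.norm_eq_abs, sq_abs]

theorem exists_unitary {d : ℕ} (i₀ : Fin d) (x : Fin d → ℂ) (hx : ∑ i, ‖x i‖ ^ 2 = 1) :
    ∃ U : Matrix.unitaryGroup (Fin d) ℂ,
      (U : Matrix (Fin d) (Fin d) ℂ).mulVec (Pi.single i₀ 1) = x := by
  have hn : ‖(WithLp.toLp 2 x : EuclideanSpace ℂ (Fin d))‖ = 1 := by
    rw [EuclideanSpace.norm_eq]; simp [hx]
  obtain ⟨b, hb⟩ := Orthonormal.exists_orthonormalBasis_extension_of_card_eq (𝕜 := ℂ)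
    (E := EuclideanSpace ℂ (Fin d)) (ι := Fin d) (by simp)
    (v := fun _ => WithLp.toLp 2 x) (s := {i₀}) (by
      constructor
      · intro i; simpa using hn
      · intro i j hij; exact absurd (Subsingleton.elim i j) hij)
  refine ⟨⟨_, (EuclideanSpace.basisFun (Fin d) ℂ).toMatrix_orthonormalBasis_mem_unitary b⟩, ?_⟩
  ext a
  have := hb i₀ rfl
  simp [Module.Basis.toMatrix_apply, this]

theorem FF_eq {d : ℕ} (μ : Measure (Matrix.unitaryGroup (Fin d) ℂ)) [μ.IsHaarMeasure]
    (ψ₀ : Fin d → ℂ) (t : ℕ) (ht : 1 ≤ t) (i₀ : Fin d) (x : Fin d → ℂ) :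
    FF μ ψ₀ t x = ((∑ i, ‖x i‖ ^ 2) ^ t : ℝ) * FF μ ψ₀ t (Pi.single i₀ 1) := by
  have h0 : 0 ≤ ∑ i, ‖x i‖ ^ 2 := by positivity
  set s := ∑ i, ‖x i‖ ^ 2 with hs
  rcases h0.eq_or_lt with h | h
  · have hx : x = 0 := by
      ext i
      have := (Finset.sum_eq_zero_iff_of_nonneg (fun i _ => by positivity)).1 (hs.symm.trans h.symm) i
        (Finset.mem_univ i)
      simpa using this
    have := FF_smul μ ψ₀ t x 0
    subst hx
    rw [← h]
    simp [show t ≠ 0 by omega] at this ⊢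
    exact this
  · have hr : 0 < √s := Real.sqrt_pos.2 h
    have hr2 : √s ^ 2 = s := Real.sq_sqrt h0
    obtain ⟨U, hU⟩ := exists_unitary i₀ (fun a => ((√s)⁻¹ : ℝ) * x a) (by
      simp only [norm_mul, mul_pow, ← Finset.mul_sum, Complex.norm_real, Real.norm_eq_abs, sq_abs]
      rw [← hs, inv_pow, hr2, inv_mul_cancel₀ h.ne'])
    have hx : x = fun a => ((√s : ℝ) : ℂ) * (((√s)⁻¹ : ℝ) * x a) := by
      ext a
      rw [← mul_assoc, ← Complex.ofReal_mul, mul_inv_cancel₀ hr.ne']; simp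
    rw [hx, FF_smul μ ψ₀ t (fun a => ((√s)⁻¹ : ℝ) * x a) (√s), ← hU, FF_unitary, hr2]

/-- moments -/
noncomputable def mom {d : ℕ} (μ : Measure (Matrix.unitaryGroup (Fin d) ℂ)) (ψ₀ : Fin d → ℂ)
    (α β : Fin d → ℕ) : ℂ :=
  ∫ V, (∏ i, vv ψ₀ V i ^ α i) * ∏ i, (starRingEnd ℂ) (vv ψ₀ V i) ^ β i ∂μ

theorem mom_off {d : ℕ} (μ : Measure (Matrix.unitaryGroup (Fin d) ℂ)) [μ.IsHaarMeasure]
    (ψ₀ : Fin d → ℂ) (α β : Fin d → ℕ) (h : α ≠ β) : mom μ ψ₀ α β = 0 := by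
  obtain ⟨i, hi⟩ := Function.ne_iff.1 h
  set k := α i + β i + 1 with hk
  have hk0 : k ≠ 0 := by omega
  set ω := Complex.exp (2 * Real.pi * Complex.I / k) with hω
  have hprim : IsPrimitiveRoot ω k := Complex.isPrimitiveRoot_exp k hk0
  have hnorm : ‖ω‖ = 1 := hprim.norm'_eq_one hk0
  have hωω : (starRingEnd ℂ) ω * ω = 1 := by
    rw [mul_comm, Complex.mul_conj, Complex.normSq_eq_norm_sq, hnorm]; simp
  let g : Fin d → ℂ := fun j => if j = i then ω else 1
  have hg : ∀ j, (starRingEnd ℂ) (g j) * g j = 1 := by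
    intro j; by_cases hj : j = i <;> simp [g, hj, hωω]
  let D : Matrix.unitaryGroup (Fin d) ℂ := ⟨Matrix.diagonal g, by
    rw [Matrix.mem_unitaryGroup_iff', Matrix.star_eq_conjTranspose, Matrix.diagonal_conjTranspose,
      Matrix.diagonal_mul_diagonal, ← Matrix.diagonal_one]
    congr 1
    ext j
    exact hg j⟩
  have hD : ∀ V j, vv ψ₀ (D * V) j = g j * vv ψ₀ V j := by
    intro V j
    rw [vv_mul, Matrix.mulVec_diagonal]
  have e : mom μ ψ₀ α β = (ω ^ α i * (starRingEnd ℂ) ω ^ β i) * mom μ ψ₀ α β := by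
    conv_lhs => unfold mom; rw [← integral_mul_left_eq_self _ D]
    unfold mom
    rw [← integral_const_mul]
    congr 1
    ext V
    simp only [hD, map_mul, mul_pow, Finset.prod_mul_distrib]
    have h1 : ∏ j, g j ^ α j = ω ^ α i := by
      rw [Finset.prod_eq_single i] <;> simp +contextual [g]
    have h2 : ∏ j, (starRingEnd ℂ) (g j) ^ β j = (starRingEnd ℂ) ω ^ β i := by
      rw [Finset.prod_eq_single i] <;> simp +contextual [g]
    rw [h1, h2]; ring
  by_contra hne
  have e1 : ω ^ α i * (starRingEnd ℂ) ω ^ β i = 1 := by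
    have : (ω ^ α i * (starRingEnd ℂ) ω ^ β i - 1) * mom μ ψ₀ α β = 0 := by
      rw [sub_mul, ← e]; ring
    exact sub_eq_zero.1 ((mul_eq_zero.1 this).resolve_right hne)
  have e2 : ω ^ α i = ω ^ β i := by
    calc ω ^ α i = ω ^ α i * ((starRingEnd ℂ) ω * ω) ^ β i := by rw [hωω]; simp
      _ = (ω ^ α i * (starRingEnd ℂ) ω ^ β i) * ω ^ β i := by rw [mul_pow]; ring
      _ = ω ^ β i := by rw [e1, one_mul]
  exact hi (hprim.pow_inj (by omega) (by omega) e2)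

theorem FF_real {d : ℕ} (μ : Measure (Matrix.unitaryGroup (Fin d) ℂ)) [μ.IsHaarMeasure]
    [IsProbabilityMeasure μ] (ψ₀ : Fin d → ℂ) (t : ℕ) (r : Fin d → ℝ) :
    FF μ ψ₀ t (fun a => (r a : ℂ)) = ∑ α ∈ Finset.piAntidiag Finset.univ t,
      (Nat.multinomial Finset.univ α : ℂ) ^ 2 * mom μ ψ₀ α α * ∏ i, (r i : ℂ) ^ (2 * α i) := by
  have hc := vv_cont ψ₀
  have hex : ∀ V, ((‖∑ a, (starRingEnd ℂ) (r a : ℂ) * vv ψ₀ V a‖ ^ (2 * t) : ℝ) : ℂ) =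
      ∑ α ∈ Finset.piAntidiag Finset.univ t, ∑ β ∈ Finset.piAntidiag Finset.univ t,
        ((Nat.multinomial Finset.univ α : ℂ) * Nat.multinomial Finset.univ β *
          ((∏ i, (r i : ℂ) ^ α i) * ∏ i, (r i : ℂ) ^ β i)) *
        ((∏ i, vv ψ₀ V i ^ α i) * ∏ i, (starRingEnd ℂ) (vv ψ₀ V i) ^ β i) := by
    intro V
    rw [pow_mul, ← Complex.normSq_eq_norm_sq, Complex.ofReal_pow, ← Complex.mul_conj, mul_pow,
      map_sum, Finset.sum_pow_eq_sum_piAntidiag, Finset.sum_pow_eq_sum_piAntidiag,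
      Finset.sum_mul_sum]
    refine Finset.sum_congr rfl fun p _ => Finset.sum_congr rfl fun q _ => ?_
    simp only [Complex.conj_ofReal, map_mul, mul_pow, Finset.prod_mul_distrib]
    ring
  unfold FF
  simp only [hex]
  rw [integral_finsetSum _ fun p _ => integrable_of_cont μ (by fun_prop)]
  refine Finset.sum_congr rfl fun α hα => ?_
  rw [integral_finsetSum _ fun p _ => integrable_of_cont μ (by fun_prop)]
  rw [Finset.sum_eq_single α]
  · rw [integral_const_mul, ← Finset.prod_mul_distrib]
    simp only [← pow_add, ← two_mul]
    unfold mom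
    ring
  · intro β _ hβ
    rw [integral_const_mul]
    have := mom_off μ ψ₀ α β hβ.symm
    unfold mom at this
    rw [this, mul_zero]
  · intro h; exact absurd hα h

theorem coeff_extract {d : ℕ} (S : Finset (Fin d → ℕ)) (A B : (Fin d → ℕ) → ℂ)
    (h : ∀ r : Fin d → ℝ, ∑ α ∈ S, A α * ∏ i, (r i : ℂ) ^ (2 * α i) =
      ∑ α ∈ S, B α * ∏ i, (r i : ℂ) ^ (2 * α i)) : ∀ α ∈ S, A α = B α := by
  let e : (Fin d → ℕ) → (Fin d →₀ ℕ) := fun α => Finsupp.equivFunOnFinite.symm (fun i => 2 * α i)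
  have he : Function.Injective e := by
    intro α β hab
    have := Finsupp.equivFunOnFinite.symm.injective hab
    ext i
    have := congrFun this i
    simp at this
    exact this
  let P : ((Fin d → ℕ) → ℂ) → MvPolynomial (Fin d) ℂ := fun A => ∑ α ∈ S, MvPolynomial.monomial (e α) (A α)
  have hev : ∀ A (x : Fin d → ℂ), MvPolynomial.eval x (P A) = ∑ α ∈ S, A α * ∏ i, x i ^ (2 * α i) := by
    intro A x
    simp only [P, map_sum, MvPolynomial.eval_monomial]
    refine Finset.sum_congr rfl fun α _ => ?_
    rw [Finsupp.prod_fintype _ _ (by simp)]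
    simp [e]
  have hP : P A = P B := by
    refine MvPolynomial.funext_set (fun _ : Fin d => Set.range ((↑) : ℝ → ℂ))
      (fun _ => Set.infinite_range_of_injective Complex.ofReal_injective) ?_
    intro x hx
    choose r hr using fun i => Set.mem_univ_pi.1 hx i
    have : x = fun i => (r i : ℂ) := by ext i; exact (hr i).symm
    rw [hev, hev, this]
    exact h r
  have hco : ∀ A, ∀ α ∈ S, MvPolynomial.coeff (e α) (P A) = A α := by
    intro A α hα
    simp only [P, MvPolynomial.coeff_sum, MvPolynomial.coeff_monomial, he.eq_iff]
    simp [hα]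
  intro α hα
  rw [← hco A α hα, hP, hco B α hα]

theorem card_anti (d t : ℕ) :
    (Finset.piAntidiag (Finset.univ : Finset (Fin d)) t).card = Nat.choose (d + t - 1) t := by
  rw [← Finset.map_sym_eq_piAntidiag, Finset.card_map]
  simp [Sym.card_sym_eq_choose]

theorem const_eq {d : ℕ} (μ : Measure (Matrix.unitaryGroup (Fin d) ℂ)) [μ.IsHaarMeasure]
    [IsProbabilityMeasure μ] (ψ₀ : Fin d → ℂ) (hψ₀ : ∑ i, ‖ψ₀ i‖ ^ 2 = 1)
    (t : ℕ) (ht : 1 ≤ t) (i₀ : Fin d) :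
    (Nat.choose (d + t - 1) t : ℂ) * FF μ ψ₀ t (Pi.single i₀ 1) = 1 := by
  have hcont := vv_cont ψ₀
  set c := FF μ ψ₀ t (Pi.single i₀ 1) with hc
  have key := coeff_extract (Finset.piAntidiag (Finset.univ : Finset (Fin d)) t)
    (fun α => (Nat.multinomial Finset.univ α : ℂ) ^ 2 * mom μ ψ₀ α α)
    (fun α => c * Nat.multinomial Finset.univ α) (by
      intro r
      rw [← FF_real, FF_eq μ ψ₀ t ht i₀, ← hc, mul_comm]
      simp only [Complex.norm_real, Real.norm_eq_abs, sq_abs, Complex.ofReal_pow,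
        Complex.ofReal_sum, mul_assoc]
      rw [← Finset.mul_sum, Finset.sum_pow_eq_sum_piAntidiag]
      simp only [pow_mul])
  have hk : ∀ α ∈ Finset.piAntidiag (Finset.univ : Finset (Fin d)) t,
      (Nat.multinomial Finset.univ α : ℂ) * mom μ ψ₀ α α = c := by
    intro α hα
    have h0 : (Nat.multinomial Finset.univ α : ℂ) ≠ 0 := by
      exact_mod_cast (Nat.multinomial_pos _ _).ne'
    refine mul_left_cancel₀ h0 ?_
    rw [← mul_assoc, ← sq, key α hα, mul_comm]
  have hsum : ∑ α ∈ Finset.piAntidiag (Finset.univ : Finset (Fin d)) t,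
      (Nat.multinomial Finset.univ α : ℂ) * mom μ ψ₀ α α = 1 := by
    unfold mom
    simp only [← integral_const_mul]
    rw [← integral_finsetSum _ fun p _ => integrable_of_cont μ (by fun_prop)]
    have : ∀ V, ∑ α ∈ Finset.piAntidiag (Finset.univ : Finset (Fin d)) t,
        (Nat.multinomial Finset.univ α : ℂ) *
          ((∏ i, vv ψ₀ V i ^ α i) * ∏ i, (starRingEnd ℂ) (vv ψ₀ V i) ^ α i) = 1 := by
      intro V
      simp only [← Finset.prod_mul_distrib, ← mul_pow]
      rw [← Finset.sum_pow_eq_sum_piAntidiag, vv_norm ψ₀ hψ₀, one_pow]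
    simp [this]
  rw [Finset.sum_congr rfl hk, Finset.sum_const, card_anti, nsmul_eq_mul] at hsum
  exact hsum

end WelchAux

/-- A complex projective `t`-design saturates the Welch bound. -/
theorem welch_bound_saturated_of_projective_design
    (d t M : ℕ) (hd : 1 ≤ d) (ht : 1 ≤ t) (hM : 1 ≤ M)
    (μ : Measure (Matrix.unitaryGroup (Fin d) ℂ)) [μ.IsHaarMeasure] [IsProbabilityMeasure μ]
    (ψ₀ : Fin d → ℂ) (hψ₀ : ∑ i, ‖ψ₀ i‖ ^ 2 = 1)
    (ψ : Fin M → (Fin d → ℂ)) (hψ : ∀ m, ∑ i, ‖ψ m i‖ ^ 2 = 1)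
    (hdesign : ∀ p q : Fin t → Fin d,
      (1 / M : ℂ) * ∑ m, ∏ n, ψ m (p n) * (starRingEnd ℂ) (ψ m (q n)) =
        ∫ V : Matrix.unitaryGroup (Fin d) ℂ,
          ∏ n, (V : Matrix (Fin d) (Fin d) ℂ).mulVec ψ₀ (p n) *
            (starRingEnd ℂ) ((V : Matrix (Fin d) (Fin d) ℂ).mulVec ψ₀ (q n)) ∂μ) :
    ∑ i, ∑ j, ‖∑ a, (starRingEnd ℂ) (ψ i a) * ψ j a‖ ^ (2 * t) =
      (M : ℝ) ^ 2 / (Nat.choose (d + t - 1) t) := by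
  have hds := WelchAux.design_sum hM μ ψ₀ ψ hdesign
  have hc := WelchAux.const_eq μ ψ₀ hψ₀ t ht ⟨0, hd⟩
  have hF : ∀ i, WelchAux.FF μ ψ₀ t (ψ i) = WelchAux.FF μ ψ₀ t (Pi.single ⟨0, hd⟩ 1) := by
    intro i
    rw [WelchAux.FF_eq μ ψ₀ t ht ⟨0, hd⟩ (ψ i), hψ i]
    simp
  have hC : (Nat.choose (d + t - 1) t : ℂ) ≠ 0 := left_ne_zero_of_mul_eq_one hc
  apply Complex.ofReal_injective
  rw [Complex.ofReal_sum]
  simp only [Complex.ofReal_sum, hds, hF]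
  push_cast
  rw [Finset.sum_const, Finset.card_univ, Fintype.card_fin, nsmul_eq_mul, eq_div_iff hC]
  linear_combination (M : ℂ) ^ 2 * hc
end

section
/- Let d ≥ 1, t ≥ 1, and let (U_m)_{m<M} (M ≥ 1) be any finite family in U(d). Then Σ_{a ∈ Fin d} Σ_{i<M} Σ_{j<M} |(U_i† U_j)_{a,a}|^{2t} ≥ d · M² / C(d+t−1, t). Moreover, if (U_m)_{m<M} is a unitary t-design, then equality holds. -/
open MeasureTheory Matrix

namespace Welch

lemma card_idx (d t : ℕ) : 
    (Finset.piAntidiag (Finset.univ : Finset (Fin d)) t).card = Nat.choose (d + t - 1) t := by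
  rw [← Finset.map_sym_eq_piAntidiag, Finset.card_map]
  simp [Sym.card_sym_eq_choose]

/-- monomial -/
noncomputable def mon {d : ℕ} (x : Fin d → ℂ) (k : Fin d → ℕ) : ℂ := ∏ p, x p ^ k p

lemma inner_pow {d : ℕ} (t : ℕ) (w x : Fin d → ℂ) :
    (∑ p, starRingEnd ℂ (w p) * x p) ^ t =
      ∑ k ∈ Finset.piAntidiag (Finset.univ : Finset (Fin d)) t,
        (Nat.multinomial Finset.univ k : ℂ) * (starRingEnd ℂ (mon w k) * mon x k) := by
  rw [Finset.sum_pow_eq_sum_piAntidiag]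
  refine Finset.sum_congr rfl fun k _ => ?_
  simp [mon, mul_pow, Finset.prod_mul_distrib]

lemma norm_pow_eq (z : ℂ) (t : ℕ) :
    ((‖z‖ ^ (2 * t) : ℝ) : ℂ) = z ^ t * starRingEnd ℂ (z ^ t) := by
  rw [Complex.mul_conj, Complex.normSq_eq_norm_sq, norm_pow, ← pow_mul, mul_comm t 2]

lemma norm_pow_inner {d : ℕ} (t : ℕ) (w x : Fin d → ℂ) :
    ((‖∑ p, starRingEnd ℂ (w p) * x p‖ ^ (2 * t) : ℝ) : ℂ) =
      ∑ k ∈ Finset.piAntidiag (Finset.univ : Finset (Fin d)) t,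
      ∑ l ∈ Finset.piAntidiag (Finset.univ : Finset (Fin d)) t,
        ((Nat.multinomial Finset.univ k : ℂ) * (Nat.multinomial Finset.univ l : ℂ)) * 
         ((starRingEnd ℂ (mon w k) * mon w l) * (mon x k * starRingEnd ℂ (mon x l))) := by
  rw [norm_pow_eq, inner_pow, map_sum, Finset.sum_mul_sum]
  refine Finset.sum_congr rfl fun k _ => Finset.sum_congr rfl fun l _ => ?_
  simp
  ring

lemma welch {d t M : ℕ} (hd : 1 ≤ d) (v : Fin M → Fin d → ℂ)
    (hv : ∀ i, ∑ p, starRingEnd ℂ (v i p) * v i p = 1) :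
    (M : ℝ) ^ 2 / (Nat.choose (d + t - 1) t) ≤
      ∑ i, ∑ j, ‖∑ p, starRingEnd ℂ (v i p) * v j p‖ ^ (2 * t) := by
  set I := Finset.piAntidiag (Finset.univ : Finset (Fin d)) t with hI
  let A : (Fin d → ℕ) → (Fin d → ℕ) → ℂ := fun k l => ∑ i, starRingEnd ℂ (mon (v i) k) * mon (v i) l
  let c : (Fin d → ℕ) → ℝ := fun k => (Nat.multinomial Finset.univ k : ℝ)
  have hc : ∀ k, 0 ≤ c k := fun k => Nat.cast_nonneg _
  have h1 : ∑ i, ∑ j, ‖∑ p, starRingEnd ℂ (v i p) * v j p‖ ^ (2 * t) =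
      ∑ k ∈ I, ∑ l ∈ I, c k * c l * ‖A k l‖ ^ 2 := by
    apply Complex.ofReal_injective
    simp only [Complex.ofReal_sum, norm_pow_inner]
    have : ∀ k l, ((c k * c l * ‖A k l‖ ^ 2 : ℝ) : ℂ) = ∑ i, ∑ j, 
        ((Nat.multinomial Finset.univ k : ℂ) * (Nat.multinomial Finset.univ l : ℂ)) * 
         ((starRingEnd ℂ (mon (v i) k) * mon (v i) l) * (mon (v j) k * starRingEnd ℂ (mon (v j) l))) := by
      intro k l
      have := norm_pow_eq (A k l) 1
      simp only [mul_one, pow_one] at this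
      rw [Complex.ofReal_mul, this]
      simp only [A, map_sum, c]
      rw [Finset.sum_mul_sum, Finset.mul_sum]
      refine Finset.sum_congr rfl fun i _ => ?_
      rw [Finset.mul_sum]
      refine Finset.sum_congr rfl fun j _ => ?_
      simp
    simp only [this]
    have e1 : ∀ f : Fin M → Fin M → (Fin d → ℕ) → (Fin d → ℕ) → ℂ,
        ∑ i, ∑ j, ∑ k ∈ I, ∑ l ∈ I, f i j k l = ∑ k ∈ I, ∑ l ∈ I, ∑ i, ∑ j, f i j k l := by
      intro f
      have e2 : ∀ g : Fin M → (Fin d → ℕ) → (Fin d → ℕ) → ℂ,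
          ∑ j, ∑ k ∈ I, ∑ l ∈ I, g j k l = ∑ k ∈ I, ∑ l ∈ I, ∑ j, g j k l := by
        intro g
        rw [Finset.sum_comm]
        exact Finset.sum_congr rfl fun k _ => Finset.sum_comm
      rw [← e2]
      exact Finset.sum_congr rfl fun i _ => e2 _
    exact e1 _
  have h2 : ∑ k ∈ I, (c k * ‖A k k‖) ^ 2 ≤ ∑ k ∈ I, ∑ l ∈ I, c k * c l * ‖A k l‖ ^ 2 := by
    refine Finset.sum_le_sum fun k hk => ?_
    have := Finset.single_le_sum (f := fun l => c k * c l * ‖A k l‖ ^ 2) (s := I)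
      (fun l _ => mul_nonneg (mul_nonneg (hc _) (hc _)) (sq_nonneg _)) hk
    refine le_trans (le_of_eq ?_) this
    ring
  have h3 : (M : ℝ) ≤ ∑ k ∈ I, c k * ‖A k k‖ := by
    have : (M : ℂ) = ∑ k ∈ I, (c k : ℂ) * A k k := by
      simp only [A, Finset.mul_sum]
      rw [Finset.sum_comm]
      have : ∀ i, ∑ k ∈ I, (c k : ℂ) * (starRingEnd ℂ (mon (v i) k) * mon (v i) k) = 1 := by
        intro i
        have := inner_pow t (v i) (v i)
        rw [hv, one_pow] at this
        rw [this]
        simp [c, hI]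
      simp [this]
    have h4 : (M : ℝ) = ‖(M : ℂ)‖ := by simp
    rw [h4, this]
    refine (norm_sum_le _ _).trans (le_of_eq ?_)
    refine Finset.sum_congr rfl fun k _ => ?_
    rw [norm_mul, Complex.norm_real, Real.norm_of_nonneg (hc k)]
  have h5 := sq_sum_le_card_mul_sum_sq (s := I) (f := fun k => c k * ‖A k k‖)
  rw [card_idx] at h5
  have hN : (0 : ℝ) < (Nat.choose (d + t - 1) t : ℝ) := by
    exact_mod_cast Nat.choose_pos (by omega)
  rw [h1, div_le_iff₀ hN]
  have h6 : (M : ℝ) ^ 2 ≤ (∑ k ∈ I, c k * ‖A k k‖) ^ 2 := by gcongr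
  nlinarith

lemma unit_col {d : ℕ} (V : Matrix.unitaryGroup (Fin d) ℂ) (a : Fin d) :
    ∑ p, starRingEnd ℂ (V p a) * V p a = 1 := by
  have := congrFun (congrFun (Unitary.coe_star_mul_self V) a) a
  simpa [Matrix.mul_apply, Matrix.star_apply] using this

lemma continuous_entry {d : ℕ} (p a : Fin d) :
    Continuous (fun V : Matrix.unitaryGroup (Fin d) ℂ => (V p a : ℂ)) := by
  have : Continuous (fun V : Matrix.unitaryGroup (Fin d) ℂ => (V : Matrix (Fin d) (Fin d) ℂ)) :=
    continuous_subtype_val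
  exact this.matrix_elem p a

lemma continuous_mon {d : ℕ} (a : Fin d) (k : Fin d → ℕ) :
    Continuous (fun V : Matrix.unitaryGroup (Fin d) ℂ => mon (fun p => V p a) k) := by
  unfold mon
  exact continuous_finsetProd _ fun p _ => (continuous_entry p a).pow _

lemma norm_mon_le {d : ℕ} (a : Fin d) (k : Fin d → ℕ) (V : Matrix.unitaryGroup (Fin d) ℂ) :
    ‖mon (fun p => V p a) k‖ ≤ 1 := by
  unfold mon
  rw [norm_prod]
  refine Finset.prod_le_one (fun _ _ => norm_nonneg _) fun p _ => ?_
  rw [norm_pow]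
  exact pow_le_one₀ (norm_nonneg _) (entry_norm_bound_of_unitary V.2 _ _)

lemma integrable_mon {d : ℕ} (μ : Measure (Matrix.unitaryGroup (Fin d) ℂ))
    [IsProbabilityMeasure μ] (a : Fin d) (k l : Fin d → ℕ) :
    Integrable (fun V : Matrix.unitaryGroup (Fin d) ℂ =>
      mon (fun p => V p a) k * starRingEnd ℂ (mon (fun p => V p a) l)) μ := by
  refine Integrable.of_bound (C := 1) ?_ (Filter.Eventually.of_forall fun V => ?_)
  · exact ((continuous_mon a k).mul (Complex.continuous_conj.comp (continuous_mon a l))).aestronglyMeasurable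
  · rw [norm_mul, RCLike.norm_conj]
    exact mul_le_one₀ (norm_mon_le _ _ _) (norm_nonneg _) (norm_mon_le _ _ _)

/-- diagonal phase at `i` -/
lemma exists_phase {d : ℕ} (i : Fin d) (θ : ℝ) :
    ∃ W : Matrix.unitaryGroup (Fin d) ℂ, (W : Matrix (Fin d) (Fin d) ℂ) =
      Matrix.diagonal (fun p => if p = i then Complex.exp (θ * Complex.I) else 1) := by
  refine ⟨⟨Matrix.diagonal (fun p => if p = i then Complex.exp (θ * Complex.I) else 1), ?_⟩, rfl⟩
  rw [Matrix.mem_unitaryGroup_iff, Matrix.star_eq_conjTranspose, Matrix.diagonal_conjTranspose,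
    Matrix.diagonal_mul_diagonal, ← Matrix.diagonal_one]
  congr 1
  ext p
  by_cases h : p = i
  · simp [h, Complex.mul_conj, Complex.normSq_eq_norm_sq, Complex.norm_exp_ofReal_mul_I]
  · simp [h]

lemma off_diag {d : ℕ} (μ : Measure (Matrix.unitaryGroup (Fin d) ℂ)) [μ.IsHaarMeasure]
    (a : Fin d) (k l : Fin d → ℕ) (hkl : k ≠ l) :
    ∫ V : Matrix.unitaryGroup (Fin d) ℂ,
      mon (fun p => V p a) k * starRingEnd ℂ (mon (fun p => V p a) l) ∂μ = 0 := by
  obtain ⟨i, hi⟩ := Function.ne_iff.mp hkl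
  have hne : ((k i : ℝ) - l i) ≠ 0 := sub_ne_zero.mpr (by exact_mod_cast hi)
  set θ : ℝ := Real.pi / ((k i : ℝ) - l i) with hθ
  obtain ⟨W, hW⟩ := exists_phase i θ
  have h1 := integral_mul_left_eq_self (μ := μ) (fun V : Matrix.unitaryGroup (Fin d) ℂ =>
    mon (fun p => V p a) k * starRingEnd ℂ (mon (fun p => V p a) l)) W
  have hm : ∀ (V : Matrix.unitaryGroup (Fin d) ℂ) k, mon (fun p => (W * V) p a) k =
      Complex.exp (θ * Complex.I) ^ (k i) * mon (fun p => V p a) k := by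
    intro V k
    have : ∀ p, (W * V) p a = (if p = i then Complex.exp (θ * Complex.I) else 1) * V p a := by
      intro p
      change ((W : Matrix (Fin d) (Fin d) ℂ) * (V : Matrix (Fin d) (Fin d) ℂ)) p a = _
      rw [hW, Matrix.diagonal_mul]
    simp only [mon, this, mul_pow, Finset.prod_mul_distrib, ite_pow, one_pow]
    simp
  have h2 : ∀ V : Matrix.unitaryGroup (Fin d) ℂ, mon (fun p => (W * V) p a) k * 
      starRingEnd ℂ (mon (fun p => (W * V) p a) l) = 
      -(mon (fun p => V p a) k * starRingEnd ℂ (mon (fun p => V p a) l)) := by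
    intro V
    have h3 : Complex.exp (θ * Complex.I) ^ (k i) * 
        starRingEnd ℂ (Complex.exp (θ * Complex.I) ^ (l i)) = -1 := by
      rw [map_pow, ← Complex.exp_conj, ← Complex.exp_nat_mul, ← Complex.exp_nat_mul,
        ← Complex.exp_add, ← Complex.exp_pi_mul_I]
      congr 1
      have : (θ : ℂ) * ((k i : ℂ) - l i) = Real.pi := by
        rw [hθ]; exact_mod_cast div_mul_cancel₀ _ hne
      simp only [map_mul, Complex.conj_ofReal, Complex.conj_I]
      linear_combination Complex.I * this
    rw [hm, hm, map_mul]
    linear_combination (mon (fun p => V p a) k * starRingEnd ℂ (mon (fun p => V p a) l)) * h3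
  simp only [h2, integral_neg] at h1
  exact self_eq_neg.mp h1.symm

/-- the value of the moment -/
lemma inner_integral {d : ℕ} (t : ℕ) (μ : Measure (Matrix.unitaryGroup (Fin d) ℂ)) [μ.IsHaarMeasure]
    (a : Fin d) (W : Matrix.unitaryGroup (Fin d) ℂ) :
    ∫ V : Matrix.unitaryGroup (Fin d) ℂ,
      ((‖∑ p, starRingEnd ℂ (W p a) * V p a‖ ^ (2 * t) : ℝ) : ℂ) ∂μ =
    ∫ V : Matrix.unitaryGroup (Fin d) ℂ, ((‖V a a‖ ^ (2 * t) : ℝ) : ℂ) ∂μ := by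
  rw [← integral_mul_left_eq_self (μ := μ) (fun V : Matrix.unitaryGroup (Fin d) ℂ => ((‖V a a‖ ^ (2 * t) : ℝ) : ℂ)) W⁻¹]
  congr 1

lemma exists_unitary_col {d : ℕ} (a : Fin d) (w : Fin d → ℝ) (hw : ∑ p, w p ^ 2 = 1) :
    ∃ W : Matrix.unitaryGroup (Fin d) ℂ, ∀ p, W p a = (w p : ℂ) := by
  let x : EuclideanSpace ℂ (Fin d) := WithLp.toLp 2 fun p => (w p : ℂ)
  have hx : ‖x‖ = 1 := by
    rw [EuclideanSpace.norm_eq]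
    simp [x, hw]
  obtain ⟨b, hb⟩ := Orthonormal.exists_orthonormalBasis_extension_of_card_eq (𝕜 := ℂ)
    (E := EuclideanSpace ℂ (Fin d)) (ι := Fin d) (by simp) (v := fun _ => x) (s := {a})
    (by
      constructor
      · intro i; simpa using hx
      · intro i j hij; exact absurd (Subsingleton.elim i j) hij)
  refine ⟨⟨_, (EuclideanSpace.basisFun (Fin d) ℂ).toMatrix_orthonormalBasis_mem_unitary b⟩, ?_⟩
  intro p
  change (EuclideanSpace.basisFun (Fin d) ℂ).toBasis.toMatrix b p a = _
  rw [Module.Basis.toMatrix_apply, hb a rfl]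
  simp [x]

lemma moment {d : ℕ} (t : ℕ) (hd : 1 ≤ d) (μ : Measure (Matrix.unitaryGroup (Fin d) ℂ)) [μ.IsHaarMeasure]
    [IsProbabilityMeasure μ] (a : Fin d) :
    ∫ V : Matrix.unitaryGroup (Fin d) ℂ, ((‖V a a‖ ^ (2 * t) : ℝ) : ℂ) ∂μ = 
      1 / (Nat.choose (d + t - 1) t : ℂ) := by
  set I := Finset.piAntidiag (Finset.univ : Finset (Fin d)) t with hI
  set C := ∫ V : Matrix.unitaryGroup (Fin d) ℂ, ((‖V a a‖ ^ (2 * t) : ℝ) : ℂ) ∂μ with hC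
  let c : (Fin d → ℕ) → ℂ := fun k => (Nat.multinomial Finset.univ k : ℂ)
  let E : (Fin d → ℕ) → ℂ := fun k => ∫ V : Matrix.unitaryGroup (Fin d) ℂ,
      mon (fun p => V p a) k * starRingEnd ℂ (mon (fun p => V p a) k) ∂μ
  -- moments along arbitrary vectors
  have hF : ∀ w : Fin d → ℂ, ∫ V : Matrix.unitaryGroup (Fin d) ℂ,
      ((‖∑ p, starRingEnd ℂ (w p) * V p a‖ ^ (2 * t) : ℝ) : ℂ) ∂μ =
      ∑ k ∈ I, c k * c k * ((starRingEnd ℂ (mon w k) * mon w k) * E k) := by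
    intro w
    simp only [norm_pow_inner]
    rw [integral_finsetSum]
    swap
    · intro k _
      refine integrable_finsetSum _ fun l _ => ?_
      exact ((integrable_mon μ a k l).const_mul _).const_mul _
    refine Finset.sum_congr rfl fun k hk => ?_
    rw [integral_finsetSum]
    swap
    · intro l _
      exact ((integrable_mon μ a k l).const_mul _).const_mul _
    simp only [integral_const_mul]
    rw [Finset.sum_eq_single_of_mem k hk]
    intro l _ hl
    rw [off_diag μ a k l hl.symm]
    simp
  have hreal : ∀ r : Fin d → ℝ, ∑ p, r p ^ 2 = 1 →
      ∑ k ∈ I, c k * c k * (∏ p, ((r p : ℂ) ^ 2) ^ k p) * E k = C := by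
    intro r hr
    obtain ⟨W, hW⟩ := exists_unitary_col a r hr
    have h1 := inner_integral t μ a W
    rw [hF (fun p => W p a)] at h1
    rw [hC, ← h1]
    refine Finset.sum_congr rfl fun k _ => ?_
    have : starRingEnd ℂ (mon (fun p => W p a) k) * mon (fun p => W p a) k = 
       ∏ p, ((r p : ℂ) ^ 2) ^ k p := by
      simp only [mon, hW, map_prod, map_pow, Complex.conj_ofReal]
      rw [← Finset.prod_mul_distrib]
      refine Finset.prod_congr rfl fun p _ => ?_
      ring
    rw [this]
    ring
  have hprob : ∀ s : Fin d → ℝ, (∀ p, 0 ≤ s p) → ∑ p, s p = 1 →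
      ∑ k ∈ I, c k * c k * (∏ p, (s p : ℂ) ^ k p) * E k = C := by
    intro s hs h1
    rw [← hreal (fun p => Real.sqrt (s p)) (by simpa [Real.sq_sqrt, hs] using h1)]
    refine Finset.sum_congr rfl fun k _ => ?_
    have : ∀ p, ((Real.sqrt (s p) : ℂ)) ^ 2 = s p := fun p => by
      exact_mod_cast Real.sq_sqrt (hs p)
    simp only [this]
  have hpos : ∀ s : Fin d → ℝ, (∀ p, 0 < s p) →
      ∑ k ∈ I, c k * c k * (∏ p, (s p : ℂ) ^ k p) * E k = 
      ∑ k ∈ I, C * (c k * (∏ p, (s p : ℂ) ^ k p)) := by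
    intro s hs
    have hS : 0 < ∑ p, s p := Finset.sum_pos (fun p _ => hs p) ⟨a, Finset.mem_univ _⟩
    set S := ∑ p, s p with hSdef
    have h1 := hprob (fun p => s p / S) (fun p => (div_pos (hs p) hS).le)
      (by rw [← Finset.sum_div]; exact div_self hS.ne')
    have hSC : (S : ℂ) ≠ 0 := by exact_mod_cast hS.ne'
    have h2 : ∑ k ∈ I, C * (c k * (∏ p, (s p : ℂ) ^ k p)) = C * (S : ℂ) ^ t := by
      rw [← Finset.mul_sum, hSdef, Complex.ofReal_sum, Finset.sum_pow_eq_sum_piAntidiag]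
    rw [h2, ← h1, Finset.sum_mul]
    refine Finset.sum_congr rfl fun k hk => ?_
    have h3 : ∏ p, (s p : ℂ) ^ k p = (∏ p, ((s p / S : ℝ) : ℂ) ^ k p) * (S : ℂ) ^ t := by
      have : ∑ p, k p = t := by simpa [hI] using hk
      rw [← this, ← Finset.prod_pow_eq_pow_sum, ← Finset.prod_mul_distrib]
      refine Finset.prod_congr rfl fun p _ => ?_
      rw [← mul_pow, Complex.ofReal_div, div_mul_cancel₀ _ hSC]
    rw [h3]; ring
  -- comparison of coefficients
  let P : (( Fin d → ℕ) → ℂ) → MvPolynomial (Fin d) ℂ := fun e =>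
    ∑ k ∈ I, MvPolynomial.monomial (Finsupp.equivFunOnFinite.symm k) (e k)
  have hPev : ∀ e s, MvPolynomial.eval s (P e) = ∑ k ∈ I, e k * ∏ p, s p ^ k p := by
    intro e s
    simp only [P, map_sum, MvPolynomial.eval_monomial]
    refine Finset.sum_congr rfl fun k _ => ?_
    rw [Finsupp.prod_fintype _ _ (by simp)]
    simp
  have hPc : ∀ e, ∀ k ∈ I, MvPolynomial.coeff (Finsupp.equivFunOnFinite.symm k) (P e) = e k := by
    intro e k hk
    simp only [P, MvPolynomial.coeff_sum, MvPolynomial.coeff_monomial, EmbeddingLike.apply_eq_iff_eq]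
    simp [hk]
  have hPeq : P (fun k => c k * c k * E k) = P (fun k => C * c k) := by
    refine MvPolynomial.funext_set (fun _ => Complex.ofReal '' Set.Ioi (0 : ℝ)) 
      (fun _ => (Set.Ioi_infinite (0 : ℝ)).image Complex.ofReal_injective.injOn) ?_
    intro x hx
    choose s hs hsx using fun p => hx p (Set.mem_univ p)
    obtain rfl : (fun p => (s p : ℂ)) = x := funext hsx
    rw [hPev, hPev]
    convert hpos s hs using 2 <;> ring
  have hE : ∀ k ∈ I, c k * E k = C := by
    intro k hk
    have h1 := congrArg (MvPolynomial.coeff (Finsupp.equivFunOnFinite.symm k)) hPeq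
    rw [hPc _ _ hk, hPc _ _ hk] at h1
    have hck : c k ≠ 0 := by
      simp only [c]
      exact_mod_cast (Nat.multinomial_pos _ _).ne'
    apply mul_left_cancel₀ hck
    linear_combination h1
  have htot : ∑ k ∈ I, c k * E k = 1 := by
    simp only [E, ← integral_const_mul]
    rw [← integral_finsetSum]
    swap
    · intro k _; exact (integrable_mon μ a k k).const_mul _
    have : ∀ V : Matrix.unitaryGroup (Fin d) ℂ, ∑ k ∈ I, c k * (mon (fun p => V p a) k * 
        starRingEnd ℂ (mon (fun p => V p a) k)) = 1 := by
      intro V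
      have h1 := inner_pow t (fun p => V p a) (fun p => V p a)
      rw [unit_col, one_pow] at h1
      rw [h1]
      refine Finset.sum_congr rfl fun k _ => ?_
      ring
    simp [this]
  rw [Finset.sum_congr rfl hE, Finset.sum_const, card_idx, nsmul_eq_mul] at htot
  exact eq_one_div_of_mul_eq_one_right htot

lemma tuple_expand {d : ℕ} (t : ℕ) (w x : Fin d → ℂ) :
    ((‖∑ p, starRingEnd ℂ (w p) * x p‖ ^ (2 * t) : ℝ) : ℂ) =
      ∑ g : Fin t → Fin d × Fin d, (∏ n, starRingEnd ℂ (w (g n).1) * w (g n).2) *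
        ∏ n, x (g n).1 * starRingEnd ℂ (x (g n).2) := by
  rw [norm_pow_eq, map_pow, ← mul_pow, map_sum, Finset.sum_mul_sum, ← Finset.sum_product',
    Finset.univ_product_univ, Fintype.sum_pow]
  refine Finset.sum_congr rfl fun g _ => ?_
  rw [← Finset.prod_mul_distrib]
  refine Finset.prod_congr rfl fun n _ => ?_
  simp
  ring

lemma integrable_tuple {d t : ℕ} (μ : Measure (Matrix.unitaryGroup (Fin d) ℂ))
    [IsProbabilityMeasure μ] (p q r s : Fin t → Fin d) :
    Integrable (fun V : Matrix.unitaryGroup (Fin d) ℂ =>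
      ∏ n, V (p n) (q n) * starRingEnd ℂ (V (r n) (s n))) μ := by
  refine Integrable.of_bound (C := 1) ?_ (Filter.Eventually.of_forall fun V => ?_)
  · exact (continuous_finsetProd _ fun n _ => (continuous_entry _ _).mul
      (Complex.continuous_conj.comp (continuous_entry _ _))).aestronglyMeasurable
  · rw [norm_prod]
    refine Finset.prod_le_one (fun _ _ => norm_nonneg _) fun n _ => ?_
    rw [norm_mul, RCLike.norm_conj]
    exact mul_le_one₀ (entry_norm_bound_of_unitary V.2 _ _) (norm_nonneg _)
      (entry_norm_bound_of_unitary V.2 _ _)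

lemma design_col {d t M : ℕ} (hd : 1 ≤ d) (hM : 1 ≤ M)
    (μ : Measure (Matrix.unitaryGroup (Fin d) ℂ)) [μ.IsHaarMeasure] [IsProbabilityMeasure μ]
    (U : Fin M → Matrix.unitaryGroup (Fin d) ℂ)
    (h : ∀ p q r s : Fin t → Fin d,
        (1 / M : ℂ) * ∑ m, ∏ n, U m (p n) (q n) * (starRingEnd ℂ) (U m (r n) (s n)) =
          ∫ V : Matrix.unitaryGroup (Fin d) ℂ,
            ∏ n, V (p n) (q n) * (starRingEnd ℂ) (V (r n) (s n)) ∂μ)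
    (a : Fin d) (i : Fin M) :
    ∑ j, ‖∑ p, starRingEnd ℂ (U i p a) * U j p a‖ ^ (2 * t) =
      (M : ℝ) / (Nat.choose (d + t - 1) t) := by
  have h1 := (inner_integral t μ a (U i)).trans (moment t hd μ a)
  have hMC : (M : ℂ) ≠ 0 := by exact_mod_cast (by omega : M ≠ 0)
  apply Complex.ofReal_injective
  rw [Complex.ofReal_div, Complex.ofReal_natCast, Complex.ofReal_natCast]
  have h2 : (1 / M : ℂ) * ∑ j, ((‖∑ p, starRingEnd ℂ (U i p a) * U j p a‖ ^ (2 * t) : ℝ) : ℂ) =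
      1 / (Nat.choose (d + t - 1) t : ℂ) := by
    rw [← h1]
    have e1 : ∀ V : Matrix.unitaryGroup (Fin d) ℂ, _ := fun V =>
      tuple_expand t (fun p => U i p a) (fun p => V p a)
    simp only [e1]
    rw [integral_finsetSum, Finset.sum_comm, Finset.mul_sum]
    · refine Finset.sum_congr rfl fun g _ => ?_
      rw [integral_const_mul, ← h (fun n => (g n).1) (fun _ => a) (fun n => (g n).2) (fun _ => a),
        ← Finset.mul_sum]
      ring
    · intro g _
      exact (integrable_tuple μ (fun n => (g n).1) (fun _ => a) (fun n => (g n).2)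
        (fun _ => a)).const_mul _
  rw [Complex.ofReal_sum, div_eq_mul_one_div, ← h2]
  field_simp

end Welch

/-- Welch-type bound for families of unitaries, with equality for
unitary `t`-designs. -/
theorem unitary_welch_bound
    (d t M : ℕ) (hd : 1 ≤ d) (ht : 1 ≤ t) (hM : 1 ≤ M)
    (μ : Measure (Matrix.unitaryGroup (Fin d) ℂ)) [μ.IsHaarMeasure] [IsProbabilityMeasure μ]
    (U : Fin M → Matrix.unitaryGroup (Fin d) ℂ) :
    ((d : ℝ) * M ^ 2 / (Nat.choose (d + t - 1) t) ≤
      ∑ a : Fin d, ∑ i, ∑ j,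
        ‖((U i : Matrix (Fin d) (Fin d) ℂ)ᴴ * (U j : Matrix (Fin d) (Fin d) ℂ)) a a‖
          ^ (2 * t)) ∧
    ((∀ p q r s : Fin t → Fin d,
        (1 / M : ℂ) * ∑ m, ∏ n, U m (p n) (q n) * (starRingEnd ℂ) (U m (r n) (s n)) =
          ∫ V : Matrix.unitaryGroup (Fin d) ℂ,
            ∏ n, V (p n) (q n) * (starRingEnd ℂ) (V (r n) (s n)) ∂μ) →
      ∑ a : Fin d, ∑ i, ∑ j,
        ‖((U i : Matrix (Fin d) (Fin d) ℂ)ᴴ * (U j : Matrix (Fin d) (Fin d) ℂ)) a a‖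
          ^ (2 * t) =
        (d : ℝ) * M ^ 2 / (Nat.choose (d + t - 1) t)) := by
  have hent : ∀ (a : Fin d) (i j : Fin M),
      ((U i : Matrix (Fin d) (Fin d) ℂ)ᴴ * (U j : Matrix (Fin d) (Fin d) ℂ)) a a =
        ∑ p, starRingEnd ℂ (U i p a) * U j p a := by
    intro a i j
    simp [Matrix.mul_apply, Matrix.conjTranspose_apply]
  simp only [hent]
  constructor
  · have h1 : (d : ℝ) * M ^ 2 / (Nat.choose (d + t - 1) t) =
        ∑ _a : Fin d, (M : ℝ) ^ 2 / (Nat.choose (d + t - 1) t) := by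
      simp [mul_div_assoc]
    rw [h1]
    exact Finset.sum_le_sum fun a _ =>
      Welch.welch hd (fun i p => U i p a) fun i => Welch.unit_col (U i) a
  · intro h
    simp only [Welch.design_col hd hM μ U h]
    simp
    ring
end
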